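/- arXiv:2307.11533 — 2 statements merged into one kernel-verified Lean document; each statement's English description precedes it below -/
import Mathlib

section
/- Let f : [0,∞) → ℝ satisfy |f(x) − f(y)| ≤ L|x − y|^α for all x, y ∈ [0,∞), with L > 0 and α ∈ (0,1]. Then for all n ≥ 1 and all x ∈ (0,∞), the Baskakov operator satisfies |f(x) − S_n(f;x)| ≤ L · (x(x+1)/n)^{α/2}. -/
/-- The Baskakov basis function of order `n` and index `k`. -/
noncomputable def baskakovBasis (n : ℕ) (x : ℝ) (k : ℕ) : ℝ :=
  ((n + k - 1).choose k : ℝ) * x ^ k / (1 + x) ^ (n + k)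

theorem baskakovBasis_nonneg (n : ℕ) {x : ℝ} (hx : 0 < x) (k : ℕ) :
    0 ≤ baskakovBasis n x k := by
  unfold baskakovBasis
  positivity

/-- The Baskakov basis is a partition of unity. -/
theorem hasSum_baskakovBasis {n : ℕ} (hn : 1 ≤ n) {x : ℝ} (hx : 0 < x) :
    HasSum (baskakovBasis n x) 1 := by
  obtain ⟨m, rfl⟩ := Nat.exists_eq_add_of_le' hn
  have hr : ‖x / (1 + x)‖ < 1 := by
    rw [Real.norm_of_nonneg (by positivity), div_lt_one (by positivity)]
    linarith
  have h := (hasSum_choose_mul_geometric_of_norm_lt_one m hr).div_const ((1 + x) ^ (m + 1))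
  have h1 : 1 - x / (1 + x) = 1 / (1 + x) := by field_simp; ring
  convert! h using 1
  · ext k
    have h2 : m + 1 + k - 1 = k + m := by omega
    rw [baskakovBasis, h2, Nat.choose_symm_add, div_pow, pow_add]
    field_simp
  · rw [h1, div_pow, one_pow]
    field_simp

theorem succ_mul_baskakovBasis_succ (n : ℕ) (x : ℝ) (k : ℕ) :
    ((k + 1 : ℕ) : ℝ) * baskakovBasis n x (k + 1) = n * x * baskakovBasis (n + 1) x k := by
  have h1 : n + (k + 1) - 1 = n + k := by omega
  have h2 : n + 1 + k - 1 = n + k := by omega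
  have h3 : n + 1 + k = n + (k + 1) := by omega
  have h4 : ((n + k).choose (k + 1) : ℝ) * (k + 1 : ℕ) = (n + k).choose k * n := by
    have := Nat.choose_succ_right_eq (n + k) k
    rw [Nat.add_sub_cancel] at this
    exact_mod_cast this
  rw [baskakovBasis, baskakovBasis, h1, h2, h3, pow_succ x k]
  linear_combination (x ^ k * x / (1 + x) ^ (n + (k + 1))) * h4

/-- Weighting the basis of order `n` by the index reduces to the basis of order `n + 1`. -/
theorem HasSum.index_mul_baskakovBasis {n : ℕ} {x : ℝ}
    {g : ℕ → ℝ} {s : ℝ} (h : HasSum (fun k ↦ g (k + 1) * baskakovBasis (n + 1) x k) s) :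
    HasSum (fun k : ℕ ↦ g k * (k * baskakovBasis n x k)) (n * x * s) := by
  rw [← hasSum_nat_add_iff' 1]
  convert! h.mul_left (n * x) using 1
  · ext k
    rw [succ_mul_baskakovBasis_succ]
    ring
  · simp

/-- The second central moment of the Baskakov basis. -/
theorem hasSum_sq_sub_mul_baskakovBasis {n : ℕ} (hn : 1 ≤ n) {x : ℝ} (hx : 0 < x) :
    HasSum (fun k : ℕ ↦ ((k : ℝ) / n - x) ^ 2 * baskakovBasis n x k) (x * (x + 1) / n) := by
  have hn0 : (n : ℝ) ≠ 0 := by positivity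
  have moment_one : ∀ m : ℕ,
      HasSum (fun k : ℕ ↦ (k : ℝ) * baskakovBasis m x k) (m * x) := fun m ↦ by
    have h : HasSum (fun k ↦ 1 * baskakovBasis (m + 1) x k) 1 := by
      simpa using hasSum_baskakovBasis (Nat.le_add_left 1 m) hx
    simpa using HasSum.index_mul_baskakovBasis (g := fun _ ↦ 1) h
  have moment_two : HasSum (fun k : ℕ ↦ ((k : ℝ) - 1) * (k * baskakovBasis n x k))
      (n * x * ((n + 1 : ℕ) * x)) := by
    refine HasSum.index_mul_baskakovBasis (g := fun k ↦ (k : ℝ) - 1) ?_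
    simpa using moment_one (n + 1)
  convert! ((moment_two.mul_left (1 / (n : ℝ) ^ 2)).add
    ((moment_one n).mul_left (1 / (n : ℝ) ^ 2 - 2 * x / n))).add
    ((hasSum_baskakovBasis hn hx).mul_left (x ^ 2)) using 1
  · ext k
    field_simp
    ring
  · push_cast
    field_simp
    ring

/-- The tangent line bound for the concave function `u ↦ u ^ (α / 2)` at `c`, with `u = t ^ 2`. -/
theorem abs_rpow_le_tangent {α c : ℝ} (hα : 0 ≤ α) (hα2 : α ≤ 2) (hc : 0 < c) (t : ℝ) :
    |t| ^ α ≤ c ^ (α / 2) * (1 + α / 2 * (t ^ 2 / c - 1)) := by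
  have h1 : |t| ^ α = c ^ (α / 2) * (1 + (t ^ 2 / c - 1)) ^ (α / 2) := by
    rw [add_sub_cancel, ← Real.mul_rpow hc.le (by positivity), mul_div_cancel₀ _ hc.ne',
      ← sq_abs, ← Real.rpow_natCast, ← Real.rpow_mul (abs_nonneg t)]
    congr 1
    push_cast
    ring
  rw [h1]
  have h2 : -1 ≤ t ^ 2 / c - 1 := by
    have : 0 ≤ t ^ 2 / c := by positivity
    linarith
  gcongr
  exact rpow_one_add_le_one_add_mul_self h2 (by linarith) (by linarith)

/-- Error bound for the Baskakov operator for a function satisfying the plain Hölder condition: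
`|f(x) - S_n(f;x)| ≤ L · (x(x+1)/n)^(α/2)`. -/
theorem baskakov_plain_holder
    (f : ℝ → ℝ) (L α : ℝ) (hL : 0 < L) (hα : 0 < α) (hα1 : α ≤ 1)
    (hf : ∀ y z : ℝ, 0 ≤ y → 0 ≤ z → |f y - f z| ≤ L * |y - z| ^ α)
    (n : ℕ) (hn : 1 ≤ n) (x : ℝ) (hx : 0 < x) :
    |f x - ∑' (k : ℕ), f ((k : ℝ) / n) *
        (((n + k - 1).choose k : ℝ) * x ^ k / (1 + x) ^ (n + k))|
      ≤ L * (x * (x + 1) / n) ^ (α / 2) := by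
  change |f x - ∑' k : ℕ, f ((k : ℝ) / n) * baskakovBasis n x k| ≤ _
  set c := x * (x + 1) / n with hc_def
  have hc : 0 < c := by positivity
  have one := hasSum_baskakovBasis hn hx
  have dominating : HasSum (fun k : ℕ ↦ L * (c ^ (α / 2) *
      (1 + α / 2 * (((k : ℝ) / n - x) ^ 2 / c - 1))) * baskakovBasis n x k)
      (L * c ^ (α / 2)) := by
    convert! (one.mul_left (L * c ^ (α / 2) * (1 - α / 2))).add
      ((hasSum_sq_sub_mul_baskakovBasis hn hx).mul_left (L * c ^ (α / 2) * (α / 2 / c))) using 1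
    · ext k
      ring
    · rw [← hc_def]
      field_simp
      ring
  have bound : ∀ k : ℕ, ‖(f ((k : ℝ) / n) - f x) * baskakovBasis n x k‖ ≤
      L * (c ^ (α / 2) * (1 + α / 2 * (((k : ℝ) / n - x) ^ 2 / c - 1))) *
        baskakovBasis n x k := fun k ↦ by
    have hb := baskakovBasis_nonneg n hx k
    rw [norm_mul, Real.norm_of_nonneg hb, Real.norm_eq_abs]
    refine mul_le_mul_of_nonneg_right ((hf _ _ (by positivity) hx.le).trans ?_) hb
    exact mul_le_mul_of_nonneg_left
      (abs_rpow_le_tangent hα.le (by linarith) hc _) hL.le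
  have summable := Summable.of_norm_bounded dominating.summable bound
  have split : HasSum (fun k : ℕ ↦ f ((k : ℝ) / n) * baskakovBasis n x k)
      (∑' k : ℕ, (f ((k : ℝ) / n) - f x) * baskakovBasis n x k + f x) := by
    convert! summable.hasSum.add (one.mul_left (f x)) using 1
    · ext k
      ring
    · ring
  rw [split.tsum_eq, sub_add_cancel_right, abs_neg]
  exact tsum_of_norm_bounded dominating bound
end

section
/- Let f : [0,∞) → ℝ be bounded with ‖f‖_∞ := sup_{y ∈ [0,∞)} |f(y)| < ∞, let n ≥ 1, x ∈ (0,∞), and set m = 2⌈nx⌉. Then the truncated Szász-Mirakjan operator satisfies |S_n(f;x) − S̃_{n,m}(f;x)| ≤ ‖f‖_∞ / (n·x). -/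
/-- The Poisson weights with parameter `t` sum to `1`. -/
lemma hasSum_poisson_weight (t : ℝ) :
    HasSum (fun k : ℕ => Real.exp (-t) * t ^ k / k.factorial) 1 := by
  have h := (NormedSpace.expSeries_div_hasSum_exp (𝔸 := ℝ) t).mul_left (Real.exp (-t))
  rw [← Real.exp_eq_exp_ℝ, ← Real.exp_add, neg_add_cancel, Real.exp_zero] at h
  simpa only [mul_div_assoc] using h

/-- The mean of the Poisson distribution with parameter `t` is `t`. -/
lemma hasSum_poisson_mean (t : ℝ) :
    HasSum (fun k : ℕ => (k : ℝ) * (Real.exp (-t) * t ^ k / k.factorial)) t := by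
  rw [← hasSum_nat_add_iff' 1]
  convert (hasSum_poisson_weight t).mul_left t using 1
  · rfl
  · funext k
    have : (k.factorial : ℝ) ≠ 0 := by positivity
    rw [Nat.factorial_succ]
    push_cast
    field_simp
    ring
  · simp

/-- The second factorial moment of the Poisson distribution with parameter `t` is `t ^ 2`. -/
lemma hasSum_poisson_factorial_moment_two (t : ℝ) :
    HasSum (fun k : ℕ => (k : ℝ) * (k - 1) * (Real.exp (-t) * t ^ k / k.factorial)) (t ^ 2) := by
  rw [← hasSum_nat_add_iff' 2]
  convert (hasSum_poisson_weight t).mul_left (t ^ 2) using 1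
  · rfl
  · funext k
    have : (k.factorial : ℝ) ≠ 0 := by positivity
    have h1 : (k : ℝ) + 1 ≠ 0 := by positivity
    have h2 : (k : ℝ) + 1 + 1 ≠ 0 := by positivity
    rw [Nat.factorial_succ, Nat.factorial_succ]
    push_cast
    rw [show (k : ℝ) + 2 = k + 1 + 1 by ring]
    field_simp
    ring
  · simp [Finset.sum_range_succ]

/-- The variance of the Poisson distribution with parameter `t` is `t`. -/
lemma hasSum_poisson_variance (t : ℝ) :
    HasSum (fun k : ℕ => ((k : ℝ) - t) ^ 2 * (Real.exp (-t) * t ^ k / k.factorial)) t := by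
  convert ((hasSum_poisson_factorial_moment_two t).add
    ((hasSum_poisson_mean t).mul_left (1 - 2 * t))).add
    ((hasSum_poisson_weight t).mul_left (t ^ 2)) using 1
  · funext k
    ring
  · ring

/-- Truncation error for the Szász-Mirakjan operator of a bounded function with truncation point
`m = 2⌈nx⌉`: `|S_n(f;x) - S̃_{n,m}(f;x)| ≤ ‖f‖_∞ / (n·x)`. -/
theorem szasz_mirakjan_truncation_error
    (f : ℝ → ℝ) (hbdd : BddAbove ((fun y => |f y|) '' Set.Ici (0 : ℝ)))
    (n : ℕ) (hn : 1 ≤ n) (x : ℝ) (hx : 0 < x) :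
    |(∑' (k : ℕ), f ((k : ℝ) / n) * (Real.exp (-(n * x)) * (n * x) ^ k / k.factorial)) -
        ∑ k ∈ Finset.range (2 * ⌈(n : ℝ) * x⌉₊ + 1),
          f ((k : ℝ) / n) * (Real.exp (-(n * x)) * (n * x) ^ k / k.factorial)|
      ≤ sSup ((fun y => |f y|) '' Set.Ici (0 : ℝ)) / (n * x) := by
  have ht : 0 < (n : ℝ) * x := mul_pos (by exact_mod_cast hn) hx
  have hceil := Nat.le_ceil ((n : ℝ) * x)
  set M := sSup ((fun y => |f y|) '' Set.Ici (0 : ℝ))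
  set N := 2 * ⌈(n : ℝ) * x⌉₊ + 1 with hN
  have hfM (k : ℕ) : |f ((k : ℝ) / n)| ≤ M :=
    le_csSup hbdd ⟨(k : ℝ) / n, Set.mem_Ici.mpr (by positivity), rfl⟩
  have hM : 0 ≤ M := (abs_nonneg _).trans (hfM 0)
  have hNt : 2 * ((n : ℝ) * x) ≤ N := by
    rw [hN]
    push_cast
    linarith
  generalize (n : ℝ) * x = t at *
  have hp (k : ℕ) : 0 ≤ Real.exp (-t) * t ^ k / k.factorial := by positivity
  have hsum : Summable fun k : ℕ =>
      f ((k : ℝ) / n) * (Real.exp (-t) * t ^ k / k.factorial) := by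
    refine ((hasSum_poisson_weight t).mul_left M).summable.of_norm_bounded fun k => ?_
    rw [Real.norm_eq_abs, abs_mul, abs_of_nonneg (hp k)]
    exact mul_le_mul_of_nonneg_right (hfM k) (hp k)
  rw [← hsum.sum_add_tsum_nat_add N, add_sub_cancel_left, ← Real.norm_eq_abs]
  have hvar := (hasSum_nat_add_iff' N).mpr ((hasSum_poisson_variance t).mul_left (M / t ^ 2))
  refine (tsum_of_norm_bounded hvar fun k => ?_).trans ?_
  · rw [Real.norm_eq_abs, abs_mul, abs_of_nonneg (hp _), ← mul_assoc]
    refine mul_le_mul_of_nonneg_right ((hfM _).trans ?_) (hp _)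
    rw [div_mul_eq_mul_div, le_div_iff₀ (by positivity)]
    gcongr
    push_cast
    linarith [(k.cast_nonneg : (0 : ℝ) ≤ k)]
  · have hhead : 0 ≤ ∑ k ∈ Finset.range N,
        M / t ^ 2 * (((k : ℝ) - t) ^ 2 * (Real.exp (-t) * t ^ k / k.factorial)) :=
      Finset.sum_nonneg fun k _ => by positivity
    have htotal : M / t ^ 2 * t = M / t := by field_simp
    linarith
end
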